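/- Let d ≥ 2, let B be a fixed real d×d matrix, and let Q₁ = (0,1)^d be the open unit cube. There exists a constant C > 0 such that for every w̄ = (v̄, Ū) ∈ Λ there exists a sequence (v_k, U_k) ∈ C_c^∞(Q₁; ℝ^d × S₀^{d×d}) together with q_k ∈ C_c^∞(Q₁) satisfying div U_k + ∇q_k = Bv_k and div v_k = 0 on ℝ^d, such that: (a) sup_{x ∈ Q₁} dist((v_k, U_k)(x), [−w̄, w̄]) → 0 as k → ∞, where [−w̄, w̄] is the closed segment joining −w̄ and w̄; (b) (v_k, U_k) → 0 in the sense of distributions, i.e. ∫ (v_k, U_k)·φ dx → 0 for every φ ∈ C_c^∞(Q₁); (c) ∫_{Q₁} |(v_k, U_k)(x)|² dx ≥ C|w̄|² for all k. -/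

import Mathlib

open MeasureTheory

noncomputable section

/-- Vectors in ℝ^d. -/
abbrev Vec (d : ℕ) := Fin d → ℝ

/-- Matrices (as functions). -/
abbrev Mat (d : ℕ) := Fin d → Fin d → ℝ

/-- The space S₀^{d×d} of symmetric trace-free d×d matrices, as a submodule. -/
def S0 (d : ℕ) : Submodule ℝ (Mat d) where
  carrier := {U | (∀ i j, U i j = U j i) ∧ ∑ i, U i i = 0}
  add_mem' := by
    rintro U V ⟨hU1, hU2⟩ ⟨hV1, hV2⟩
    refine ⟨fun i j => by simp [hU1 i j, hV1 i j], ?_⟩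
    simp [Finset.sum_add_distrib, hU2, hV2]
  zero_mem' := ⟨fun i j => rfl, by simp⟩
  smul_mem' := by
    rintro c U ⟨hU1, hU2⟩
    refine ⟨fun i j => by simp [hU1 i j], ?_⟩
    simp [← Finset.mul_sum, hU2]

/-- Partial derivative ∂ᵢ of a scalar function. -/
def pd {d : ℕ} (i : Fin d) (f : Vec d → ℝ) (x : Vec d) : ℝ :=
  fderiv ℝ f x (Pi.single i 1)

/-- The wave cone Λ: states `(v̄, Ū)` with `v̄ ≠ 0` for which there are `q̄ ∈ ℝ` and
`ξ ≠ 0` with `Ū ξ + q̄ ξ = 0` and `v̄ · ξ = 0`. -/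
def Lam (d : ℕ) : Set (Vec d × S0 d) :=
  {w | w.1 ≠ 0 ∧ ∃ (q : ℝ) (ξ : Vec d), ξ ≠ 0 ∧
    (∀ i, (∑ j, (w.2 : Mat d) i j * ξ j) + q * ξ i = 0) ∧ (∑ i, w.1 i * ξ i = 0)}

/-- The open unit cube Q₁ = (0,1)^d. -/
def unitCube (d : ℕ) : Set (Vec d) := {x | ∀ i, x i ∈ Set.Ioo (0 : ℝ) 1}

open Filter Topology

def K0 (d : ℕ) : Set (Vec d) := Metric.closedBall (fun _ => 1/2) (1/4)

lemma K0_sub (d : ℕ) : K0 d ⊆ unitCube d := by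
  intro x hx i
  have h1 := (dist_le_pi_dist x (fun _ => (1/2:ℝ)) i).trans hx
  rw [Real.dist_eq, abs_le] at h1
  constructor <;> linarith [h1.1, h1.2]

lemma K0_closed (d : ℕ) : IsClosed (K0 d) := Metric.isClosed_closedBall
lemma K0_compact (d : ℕ) : IsCompact (K0 d) := isCompact_closedBall _ _

def SS (d : ℕ) : Submodule ℝ (Vec d → ℝ) where
  carrier := {f | ContDiff ℝ (⊤ : ℕ∞) f ∧ ∀ x ∉ K0 d, f x = 0}
  add_mem' := by
    rintro f g ⟨h1, h2⟩ ⟨h3, h4⟩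
    exact ⟨h1.add h3, fun x hx => by simp [h2 x hx, h4 x hx]⟩
  zero_mem' := ⟨contDiff_const, fun x hx => rfl⟩
  smul_mem' := by
    rintro c f ⟨h1, h2⟩
    exact ⟨contDiff_const.mul h1, fun x hx => by simp [h2 x hx]⟩

lemma SS.diff {d : ℕ} (f : SS d) : Differentiable ℝ (f : Vec d → ℝ) :=
  f.2.1.differentiable (by simp)

lemma SS.cont {d : ℕ} (f : SS d) : Continuous (f : Vec d → ℝ) := f.2.1.continuous

lemma SS.cs {d : ℕ} (f : SS d) : HasCompactSupport (f : Vec d → ℝ) :=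
  HasCompactSupport.intro (K0_compact d) f.2.2

lemma SS.bdd {d : ℕ} (f : SS d) : ∃ K, ∀ x, |(f : Vec d → ℝ) x| ≤ K := by
  simpa using (SS.cs f).exists_bound_of_continuous (SS.cont f)

def Dir {d : ℕ} (a : Vec d) : SS d →ₗ[ℝ] SS d where
  toFun f := ⟨fun x => fderiv ℝ (f : Vec d → ℝ) x a, by
    constructor
    · exact (f.2.1.fderiv_right (m := (⊤ : ℕ∞)) (by simp)).clm_apply contDiff_const
    · intro x hx
      have : (f : Vec d → ℝ) =ᶠ[𝓝 x] fun _ => 0 := by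
        filter_upwards [(K0_closed d).isOpen_compl.mem_nhds hx] with y hy using f.2.2 y hy
      show fderiv ℝ (f : Vec d → ℝ) x a = 0
      rw [this.fderiv_eq]; simp⟩
  map_add' f g := by
    ext x
    simp [fderiv_add ((SS.diff f) x) ((SS.diff g) x)]
  map_smul' c f := by
    ext x
    simp [fderiv_const_smul ((SS.diff f) x)]

lemma Dir_apply {d : ℕ} (a : Vec d) (f : SS d) (x : Vec d) :
    (Dir a f : Vec d → ℝ) x = fderiv ℝ (f : Vec d → ℝ) x a := rfl

lemma Dir_comm {d : ℕ} (a b : Vec d) (f : SS d) : Dir a (Dir b f) = Dir b (Dir a f) := by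
  ext x
  have hd : DifferentiableAt ℝ (fderiv ℝ (f : Vec d → ℝ)) x :=
    ((f.2.1.fderiv_right (m := (⊤ : ℕ∞)) (by simp)).differentiable (by simp)) x
  have key : ∀ a b : Vec d, (Dir a (Dir b f) : Vec d → ℝ) x
      = fderiv ℝ (fderiv ℝ (f : Vec d → ℝ)) x a b := by
    intro a b
    rw [Dir_apply]
    have : ((Dir b f : SS d) : Vec d → ℝ) = fun y => fderiv ℝ (f : Vec d → ℝ) y b := rfl
    rw [this, fderiv_clm_apply hd (by fun_prop)]
    simp
  rw [key, key]
  have := (f.2.1.contDiffAt (x := x)).isSymmSndFDerivAt (by simp; exact WithTop.coe_le_coe.2 (le_top : (2:ℕ∞) ≤ ⊤))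
  exact this a b

abbrev ee {d : ℕ} (i : Fin d) : Vec d := Pi.single i 1

lemma pd_eq {d : ℕ} (i : Fin d) (f : SS d) (x : Vec d) :
    pd i (f : Vec d → ℝ) x = (Dir (ee i) f : Vec d → ℝ) x := rfl

lemma Dir_sum {d : ℕ} (a : Vec d) (f : SS d) : ∑ i, a i • Dir (ee i) f = Dir a f := by
  ext x
  have : a = ∑ i, a i • (ee i : Vec d) := by
    ext j; simp [Finset.sum_apply, Pi.single_apply]
  conv_rhs => rw [this]
  simp [Dir_apply]

def dt {d : ℕ} (a b : Vec d) : ℝ := ∑ i, a i * b i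

/-- oscillating functions -/
def G {d : ℕ} (ξ : Vec d) (t : ℝ) (a b : SS d) : SS d :=
  ⟨fun x => (a : Vec d → ℝ) x * Real.sin (t * dt x ξ) + (b : Vec d → ℝ) x * Real.cos (t * dt x ξ), by
    have h : ContDiff ℝ (⊤ : ℕ∞) (fun x : Vec d => t * dt x ξ) := by
      unfold dt; fun_prop
    constructor
    · exact (a.2.1.mul (Real.contDiff_sin.comp h)).add (b.2.1.mul (Real.contDiff_cos.comp h))
    · intro x hx
      simp [a.2.2 x hx, b.2.2 x hx]⟩

lemma G_apply {d : ℕ} (ξ : Vec d) (t : ℝ) (a b : SS d) (x : Vec d) :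
  (G ξ t a b : Vec d → ℝ) x = (a : Vec d → ℝ) x * Real.sin (t * dt x ξ)
    + (b : Vec d → ℝ) x * Real.cos (t * dt x ξ) := rfl

lemma Dir_G {d : ℕ} (ξ : Vec d) (t : ℝ) (a b : SS d) (e : Vec d) :
    Dir e (G ξ t a b) = G ξ t (Dir e a - (t * dt e ξ) • b) (Dir e b + (t * dt e ξ) • a) := by
  ext x
  rw [Dir_apply]
  let L : Vec d →L[ℝ] ℝ := ∑ i, ξ i • ContinuousLinearMap.proj i
  have hL : ∀ y, L y = dt y ξ := by
    intro y; simp [L, dt, mul_comm]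
  have h0 : HasFDerivAt (fun x : Vec d => t * dt x ξ) (t • L) x := by
    have := (L.hasFDerivAt (x := x)).const_smul t
    refine this.congr_of_eventuallyEq (Eventually.of_forall fun y => ?_)
    simp [hL]
  have h := (((SS.diff a) x).hasFDerivAt.mul h0.sin).add (((SS.diff b) x).hasFDerivAt.mul h0.cos)
  have h' : fderiv ℝ (G ξ t a b : Vec d → ℝ) x = _ := h.fderiv
  rw [h']
  simp [G_apply, Dir_apply, hL]
  ring

def Lead {d : ℕ} (η : SS d) (ξ : Vec d) (f : ℕ → SS d) (s : ℝ) : Prop :=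
  ∃ K, ∀ (n : ℕ) x, |(f n : Vec d → ℝ) x - s * ((η : Vec d → ℝ) x * Real.cos ((n+1 : ℝ) * dt x ξ))|
    ≤ K * (1 / ((n : ℝ) + 1))

section
variable {d : ℕ} {η : SS d} {ξ : Vec d}

lemma Lead.add {f g : ℕ → SS d} {s r : ℝ} (hf : Lead η ξ f s) (hg : Lead η ξ g r) :
    Lead η ξ (fun n => f n + g n) (s + r) := by
  obtain ⟨K, hK⟩ := hf
  obtain ⟨K', hK'⟩ := hg
  refine ⟨K + K', fun n x => ?_⟩
  have := (abs_add_le _ _).trans (add_le_add (hK n x) (hK' n x))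
  refine le_trans (le_of_eq ?_) (this.trans_eq (by ring))
  congr 1
  simp; ring

lemma Lead.smul {f : ℕ → SS d} {s : ℝ} (c : ℝ) (hf : Lead η ξ f s) :
    Lead η ξ (fun n => c • f n) (c * s) := by
  obtain ⟨K, hK⟩ := hf
  refine ⟨|c| * K, fun n x => ?_⟩
  have := mul_le_mul_of_nonneg_left (hK n x) (abs_nonneg c)
  refine le_trans (le_of_eq ?_) (this.trans_eq (by ring))
  rw [← abs_mul]
  congr 1
  simp; ring

lemma Lead.sub {f g : ℕ → SS d} {s r : ℝ} (hf : Lead η ξ f s) (hg : Lead η ξ g r) :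
    Lead η ξ (fun n => f n - g n) (s - r) := by
  have := hf.add (hg.smul (-1))
  have e : ∀ n, f n + (-1 : ℝ) • g n = f n - g n := fun n => by module
  simp only [e] at this
  convert this using 1
  ring

lemma Lead.zero : Lead η ξ (fun _ => 0) 0 := ⟨0, fun n x => by simp⟩

lemma Lead.sum {ι : Type*} (S : Finset ι) {f : ι → ℕ → SS d} {s : ι → ℝ}
    (h : ∀ i, Lead η ξ (f i) (s i)) : Lead η ξ (fun n => ∑ i ∈ S, f i n) (∑ i ∈ S, s i) := by
  classical
  induction S using Finset.induction_on with
  | empty => simpa using Lead.zero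
  | insert a S ha ih =>
    simp only [Finset.sum_insert ha]
    exact (h a).add ih

lemma Lead.ite {f : ℕ → SS d} {s : ℝ} (p : Prop) [Decidable p] (hf : Lead η ξ f s) :
    Lead η ξ (fun n => if p then f n else 0) (if p then s else 0) := by
  split_ifs
  · exact hf
  · exact Lead.zero

lemma Lead.G_small (a b : SS d) (p : ℕ) :
    Lead η ξ (fun n => (1 / ((n : ℝ) + 1)) ^ (p + 1) • G ξ ((n : ℝ) + 1) a b) 0 := by
  obtain ⟨K, hK⟩ := (SS.bdd a)
  obtain ⟨K', hK'⟩ := (SS.bdd b)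
  refine ⟨K + K', fun n x => ?_⟩
  have e0 : 0 < 1 / ((n : ℝ) + 1) := by positivity
  have e1 : 1 / ((n : ℝ) + 1) ≤ 1 := by
    rw [div_le_one (by positivity)]; linarith [Nat.cast_nonneg (α := ℝ) n]
  have hG : |(G ξ ((n : ℝ) + 1) a b : Vec d → ℝ) x| ≤ K + K' := by
    rw [G_apply]
    refine (abs_add_le _ _).trans (add_le_add ?_ ?_) <;> rw [abs_mul]
    · exact (mul_le_of_le_one_right (abs_nonneg _) (Real.abs_sin_le_one _)).trans (hK x)
    · exact (mul_le_of_le_one_right (abs_nonneg _) (Real.abs_cos_le_one _)).trans (hK' x)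
  have : (1 / ((n : ℝ) + 1)) ^ (p + 1) ≤ 1 / ((n : ℝ) + 1) :=
    pow_le_of_le_one e0.le e1 (by simp)
  rw [zero_mul, sub_zero, Submodule.coe_smul, Pi.smul_apply, smul_eq_mul, abs_mul,
    abs_of_pos (pow_pos e0 _), mul_comm]
  exact mul_le_mul hG this (pow_pos e0 _).le ((abs_nonneg _).trans hG)

lemma Lead.G_main : Lead η ξ (fun n => G ξ ((n : ℝ) + 1) 0 η) 1 :=
  ⟨0, fun n x => by simp [G_apply]⟩

def psi (η : SS d) (ξ : Vec d) (n : ℕ) : SS d :=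
  (-(1 / ((n : ℝ) + 1)) ^ 3) • G ξ ((n : ℝ) + 1) η 0

lemma Lead.psi2 (a b : Vec d) : Lead η ξ (fun n => Dir a (Dir b (psi η ξ n))) 0 := by
  have h := ((Lead.G_small (η := η) (ξ := ξ) (-Dir a (Dir b η)) 0 2).add
    (Lead.G_small (η := η) (ξ := ξ) ((dt a ξ * dt b ξ) • η) 0 0)).add
    (Lead.G_small (η := η) (ξ := ξ) 0 (-(dt a ξ • Dir b η + dt b ξ • Dir a η)) 1)
  convert h using 1
  · funext n
    ext x
    simp [psi, Dir_G, G_apply]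
    field_simp
    ring
  · simp

lemma Lead.psi3 (a b c : Vec d) :
    Lead η ξ (fun n => Dir a (Dir b (Dir c (psi η ξ n)))) (dt a ξ * dt b ξ * dt c ξ) := by
  have h := (((Lead.G_small (η := η) (ξ := ξ) (-Dir a (Dir b (Dir c η))) 0 2).add
    (Lead.G_small (η := η) (ξ := ξ) ((dt a ξ * dt b ξ) • Dir c η + (dt a ξ * dt c ξ) • Dir b η
      + (dt b ξ * dt c ξ) • Dir a η) 0 0)).add
    (Lead.G_small (η := η) (ξ := ξ) 0 (-(dt a ξ • Dir b (Dir c η) + dt b ξ • Dir a (Dir c η)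
      + dt c ξ • Dir a (Dir b η))) 1)).add
    ((Lead.G_main (η := η) (ξ := ξ)).smul (dt a ξ * dt b ξ * dt c ξ))
  convert h using 1
  · funext n
    ext x
    simp [psi, Dir_G, G_apply]
    field_simp
    ring
  · simp

end

section
variable {d : ℕ}

def uu (a ξ : Vec d) (ψ : SS d) (i : Fin d) : SS d := a i • Dir ξ ψ - ξ i • Dir a ψ

def vv (a ξ : Vec d) (ψ : SS d) (i : Fin d) : SS d :=
  ∑ l, Dir (ee l) (Dir (ee l) (uu a ξ ψ i))

def hh (B : Mat d) (a ξ : Vec d) (ψ : SS d) (i : Fin d) : SS d := ∑ m, B i m • uu a ξ ψ m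

def M1 (h : Fin d → SS d) (i j : Fin d) : SS d :=
  Dir (ee i) (h j) + Dir (ee j) (h i) - (if i = j then ∑ m, Dir (ee m) (h m) else 0)

def M2 (N : Mat d) (ξ : Vec d) (φ : SS d) (i j : Fin d) : SS d :=
  N i j • Dir ξ (Dir ξ φ) - ξ i • Dir (N j) (Dir ξ φ) - ξ j • Dir (N i) (Dir ξ φ)
    + (ξ i * ξ j) • ∑ m, Dir (ee m) (Dir (N m) φ)

def MM (B N : Mat d) (a ξ : Vec d) (ψ : SS d) (i j : Fin d) : SS d :=
  M1 (hh B a ξ ψ) i j + M2 N ξ (Dir ξ ψ) i j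

def qq (B N : Mat d) (a ξ : Vec d) (ψ : SS d) : SS d :=
  (1 / (d : ℝ)) • ∑ i, MM B N a ξ ψ i i

def UU (B N : Mat d) (a ξ : Vec d) (ψ : SS d) (i j : Fin d) : SS d :=
  MM B N a ξ ψ i j - (if i = j then qq B N a ξ ψ else 0)

lemma div_uu (a ξ : Vec d) (ψ : SS d) : ∑ i, Dir (ee i) (uu a ξ ψ i) = 0 := by
  simp only [uu, map_sub, map_smul, Finset.sum_sub_distrib, Dir_sum]
  rw [Dir_comm, sub_self]

lemma div_vv (a ξ : Vec d) (ψ : SS d) : ∑ i, Dir (ee i) (vv a ξ ψ i) = 0 := by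
  simp only [vv, map_sum]
  rw [Finset.sum_comm]
  apply Finset.sum_eq_zero
  intro l _
  have : ∀ i, Dir (ee i) (Dir (ee l) (Dir (ee l) (uu a ξ ψ i)))
    = Dir (ee l) (Dir (ee l) (Dir (ee i) (uu a ξ ψ i))) := by
    intro i
    rw [Dir_comm (ee i), Dir_comm (ee i)]
  simp only [this, ← map_sum, div_uu, map_zero]

lemma div_M1 (h : Fin d → SS d) (i : Fin d) :
    ∑ j, Dir (ee j) (M1 h i j) = ∑ l, Dir (ee l) (Dir (ee l) (h i)) := by
  simp only [M1, map_sub, map_add, Finset.sum_sub_distrib, Finset.sum_add_distrib]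
  have h1 : ∑ j, Dir (ee j) (Dir (ee i) (h j)) = Dir (ee i) (∑ m, Dir (ee m) (h m)) := by
    rw [map_sum]
    exact Finset.sum_congr rfl fun j _ => Dir_comm _ _ _
  have h2 : ∑ j, Dir (ee j) (if i = j then ∑ m, Dir (ee m) (h m) else 0)
      = Dir (ee i) (∑ m, Dir (ee m) (h m)) := by
    rw [Finset.sum_eq_single i]
    · simp
    · intro j _ hj
      rw [if_neg (Ne.symm hj), map_zero]
    · simp
  rw [h1, h2]
  abel

lemma div_M2 (N : Mat d) (ξ : Vec d) (φ : SS d) (i : Fin d) :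
    ∑ j, Dir (ee j) (M2 N ξ φ i j) = 0 := by
  simp only [M2, map_sub, map_add, map_smul, Finset.sum_sub_distrib, Finset.sum_add_distrib, 
    mul_smul, ← Finset.smul_sum, Dir_sum]
  have h1 : ∑ j, Dir (ee j) (Dir (N j) (Dir ξ φ)) = Dir ξ (∑ m, Dir (ee m) (Dir (N m) φ)) := by
    rw [map_sum]
    refine Finset.sum_congr rfl fun j _ => ?_
    rw [Dir_comm (N j) ξ, Dir_comm]
  have h2 : Dir ξ (Dir (N i) (Dir ξ φ)) = Dir (N i) (Dir ξ (Dir ξ φ)) := Dir_comm _ _ _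
  rw [h1, h2]
  abel

lemma hh_eq (B : Mat d) (a ξ : Vec d) (ψ : SS d) (i : Fin d) :
    ∑ l, Dir (ee l) (Dir (ee l) (hh B a ξ ψ i)) = ∑ j, B i j • vv a ξ ψ j := by
  simp only [hh, vv, map_sum, map_smul, Finset.smul_sum]
  rw [Finset.sum_comm]

lemma div_UU (B N : Mat d) (a ξ : Vec d) (ψ : SS d) (i : Fin d) :
    ∑ j, Dir (ee j) (UU B N a ξ ψ i j) + Dir (ee i) (qq B N a ξ ψ) = ∑ j, B i j • vv a ξ ψ j := by
  have h2 : ∑ j, Dir (ee j) (if i = j then qq B N a ξ ψ else 0)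
      = Dir (ee i) (qq B N a ξ ψ) := by
    rw [Finset.sum_eq_single i]
    · simp
    · intro j _ hj
      rw [if_neg (Ne.symm hj), map_zero]
    · simp
  simp only [UU, map_sub, Finset.sum_sub_distrib, h2, sub_add_cancel]
  simp only [MM, map_add, Finset.sum_add_distrib, div_M1, div_M2, hh_eq, add_zero]

lemma MM_symm (B N : Mat d) (hN : ∀ i j, N i j = N j i) (a ξ : Vec d) (ψ : SS d) (i j : Fin d) :
    MM B N a ξ ψ i j = MM B N a ξ ψ j i := by
  have h1 : M1 (hh B a ξ ψ) i j = M1 (hh B a ξ ψ) j i := by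
    simp only [M1, eq_comm (a := i) (b := j)]
    abel
  have h2 : M2 N ξ (Dir ξ ψ) i j = M2 N ξ (Dir ξ ψ) j i := by
    simp only [M2, hN i j, mul_comm (ξ i) (ξ j)]
    abel
  rw [MM, MM, h1, h2]

lemma UU_symm (B N : Mat d) (hN : ∀ i j, N i j = N j i) (a ξ : Vec d) (ψ : SS d) (i j : Fin d) :
    UU B N a ξ ψ i j = UU B N a ξ ψ j i := by
  simp only [UU, MM_symm B N hN a ξ ψ i j, eq_comm (a := i) (b := j)]

lemma UU_trace (hd : d ≠ 0) (B N : Mat d) (a ξ : Vec d) (ψ : SS d) :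
    ∑ i, UU B N a ξ ψ i i = 0 := by
  have : (d : ℝ) ≠ 0 := by exact_mod_cast hd
  simp only [UU, if_true, Finset.sum_sub_distrib, Finset.sum_const, Finset.card_univ,
    Fintype.card_fin, qq]
  rw [← Nat.cast_smul_eq_nsmul ℝ, smul_smul, mul_one_div_cancel this, one_smul, sub_self]

lemma Lead.cast {η : SS d} {ξ : Vec d} {f : ℕ → SS d} {s r : ℝ} (h : Lead η ξ f s) (e : s = r) :
    Lead η ξ f r := e ▸ h

lemma dt_ee (i : Fin d) (ξ : Vec d) : dt (ee i) ξ = ξ i := by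
  simp [dt, Pi.single_apply]

lemma vv_lead (η : SS d) (a ξ : Vec d) (h1 : dt ξ ξ = 1) (ha : dt a ξ = 0) (i : Fin d) :
    Lead η ξ (fun n => vv a ξ (psi η ξ n) i) (a i) := by
  have := Lead.sum Finset.univ (fun l : Fin d =>
    ((Lead.psi3 (η := η) (ξ := ξ) (ee l) (ee l) ξ).smul (a i)).sub
    ((Lead.psi3 (η := η) (ξ := ξ) (ee l) (ee l) a).smul (ξ i)))
  simp only [vv, uu, map_sub, map_smul]
  refine this.cast ?_
  simp only [h1, ha, dt_ee, mul_one, mul_zero, sub_zero, ← Finset.mul_sum]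
  rw [show ∑ l, ξ l * ξ l = 1 from h1, mul_one]

lemma hh_lead (η : SS d) (B : Mat d) (a ξ : Vec d) (i j : Fin d) :
    Lead η ξ (fun n => Dir (ee j) (hh B a ξ (psi η ξ n) i)) 0 := by
  have := Lead.sum Finset.univ (fun m : Fin d =>
    (((Lead.psi2 (η := η) (ξ := ξ) (ee j) ξ).smul (a m)).sub
    ((Lead.psi2 (η := η) (ξ := ξ) (ee j) a).smul (ξ m))).smul (B i m))
  simp only [hh, uu, map_sub, map_smul, map_sum]
  exact this.cast (by simp)

lemma MM_lead (η : SS d) (B N : Mat d) (a ξ : Vec d) (h1 : dt ξ ξ = 1)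
    (hN : ∀ i, dt (N i) ξ = 0) (i j : Fin d) :
    Lead η ξ (fun n => MM B N a ξ (psi η ξ n) i j) (N i j) := by
  have e1 : Lead η ξ (fun n => M1 (hh B a ξ (psi η ξ n)) i j) 0 := by
    have := ((hh_lead η B a ξ j i).add (hh_lead η B a ξ i j)).sub
      (Lead.ite (i = j) (Lead.sum Finset.univ fun m : Fin d => hh_lead η B a ξ m m))
    exact this.cast (by simp)
  have e2 : Lead η ξ (fun n => M2 N ξ (Dir ξ (psi η ξ n)) i j) (N i j) := by
    have := ((((Lead.psi3 (η := η) (ξ := ξ) ξ ξ ξ).smul (N i j)).sub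
      ((Lead.psi3 (η := η) (ξ := ξ) (N j) ξ ξ).smul (ξ i))).sub
      ((Lead.psi3 (η := η) (ξ := ξ) (N i) ξ ξ).smul (ξ j))).add
      ((Lead.sum Finset.univ fun m : Fin d =>
        Lead.psi3 (η := η) (ξ := ξ) (ee m) (N m) ξ).smul (ξ i * ξ j))
    exact this.cast (by simp [h1, hN])
  exact (e1.add e2).cast (by simp)

lemma UU_lead (η : SS d) (B N : Mat d) (a ξ : Vec d) (h1 : dt ξ ξ = 1)
    (hN : ∀ i, dt (N i) ξ = 0) (i j : Fin d) :
    Lead η ξ (fun n => UU B N a ξ (psi η ξ n) i j)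
      (N i j - if i = j then (1 / (d : ℝ)) * ∑ m, N m m else 0) :=
  (MM_lead η B N a ξ h1 hN i j).sub (Lead.ite (i = j)
    ((Lead.sum Finset.univ fun m : Fin d => MM_lead η B N a ξ h1 hN m m).smul (1 / (d : ℝ))))

end

section
variable {d : ℕ}

lemma dt_cont (ξ : Vec d) : Continuous fun x : Vec d => dt x ξ := by
  unfold dt; fun_prop

lemma sq_cs (f : SS d) : HasCompactSupport (fun x => (f : Vec d → ℝ) x ^ 2) :=
  HasCompactSupport.intro (K0_compact d) fun x hx => by simp [f.2.2 x hx]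

lemma sq_cs2 (f : SS d) : HasCompactSupport (fun x => (f : Vec d → ℝ) x ^ 2 / 2) :=
  HasCompactSupport.intro (K0_compact d) fun x hx => by simp [f.2.2 x hx]

lemma sq_int (f : SS d) : Integrable (fun x => (f : Vec d → ℝ) x ^ 2) := by
  have := SS.cont f
  exact Continuous.integrable_of_hasCompactSupport (by fun_prop) (sq_cs f)

lemma RL (f : Vec d → ℝ) (hf : Continuous f) (hc : HasCompactSupport f) (ξ : Vec d)
    (h1 : dt ξ ξ = 1) (c : ℝ) (hcp : 0 < c) :
    Tendsto (fun n : ℕ => ∫ x, f x * Real.cos (c * (((n : ℝ) + 1) * dt x ξ))) atTop (𝓝 0) := by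
  let L : Vec d →L[ℝ] ℝ := ∑ i, ξ i • ContinuousLinearMap.proj i
  have hL : ∀ y, L y = dt y ξ := by
    intro y; simp [L, dt, mul_comm]
  have hL0 : L ≠ 0 := by
    intro h
    have := hL ξ
    rw [h, h1] at this
    simp at this
  have hw : Tendsto (fun n : ℕ => ((c * ((n : ℝ) + 1)) / (2 * Real.pi)) • L) atTop
      (cocompact (StrongDual ℝ (Vec d))) := by
    rw [← Metric.cobounded_eq_cocompact, ← tendsto_norm_atTop_iff_cobounded]
    simp only [norm_smul]
    apply Tendsto.atTop_mul_const (norm_pos_iff.2 hL0)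
    apply tendsto_norm_atTop_atTop.comp
    apply Tendsto.atTop_div_const (by positivity)
    apply Tendsto.const_mul_atTop hcp
    exact tendsto_atTop_add_const_right _ _ tendsto_natCast_atTop_atTop
  have h := (tendsto_integral_exp_smul_cocompact (fun x => (f x : ℂ)) (volume : Measure (Vec d))).comp hw
  have h2 := (Complex.continuous_re.tendsto 0).comp h
  rw [Complex.zero_re] at h2
  refine h2.congr fun n => ?_
  simp only [Function.comp]
  have hint : Integrable (fun v : Vec d => Real.fourierChar
      (-(((c * ((n : ℝ) + 1)) / (2 * Real.pi)) • L) v) • (f v : ℂ)) := by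
    apply Continuous.integrable_of_hasCompactSupport
    · have h3 : Continuous (fun v : Vec d => (-(((c * ((n : ℝ) + 1)) / (2 * Real.pi)) • L) v)) := by
        fun_prop
      have h4 := Real.continuous_fourierChar.comp h3
      exact h4.smul (Complex.continuous_ofReal.comp hf)
    · exact (hc.comp_left (g := fun r : ℝ => (r : ℂ)) (by simp)).smul_left
  rw [← RCLike.re_eq_complex_re, ← integral_re hint]
  congr 1
  funext x
  rw [Circle.smul_def, Real.fourierChar_apply]
  simp only [_root_.smul_apply, hL, smul_eq_mul, RCLike.re_eq_complex_re]
  rw [Complex.mul_re, Complex.ofReal_re, Complex.ofReal_im, mul_zero, sub_zero,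
    Complex.exp_ofReal_mul_I_re, mul_comm, ← Real.cos_neg]
  congr 2
  field_simp

lemma tend_aux (g h : ℕ → Vec d → ℝ) (b : Vec d → ℝ) (hg : ∀ n, Integrable (g n))
    (hh : ∀ n, Integrable (h n)) (hb : Integrable b) (l : ℝ)
    (hgh : ∀ (n : ℕ) x, |g n x - h n x| ≤ (1 / ((n : ℝ) + 1)) * b x)
    (H : Tendsto (fun n => ∫ x, h n x) atTop (𝓝 l)) :
    Tendsto (fun n => ∫ x, g n x) atTop (𝓝 l) := by
  have h0 : Tendsto (fun n => ∫ x, (g n x - h n x)) atTop (𝓝 0) := by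
    apply squeeze_zero_norm (a := fun n : ℕ => (1 / ((n : ℝ) + 1)) * ∫ x, b x)
    · intro n
      rw [← integral_const_mul]
      exact norm_integral_le_of_norm_le (hb.const_mul _) (Eventually.of_forall fun x => hgh n x)
    · simpa using (tendsto_one_div_add_atTop_nhds_zero_nat (𝕜 := ℝ)).mul_const (∫ x, b x)
  have := h0.add H
  rw [zero_add] at this
  refine this.congr fun n => ?_
  rw [integral_sub (hg n) (hh n)]
  ring

lemma Lead.weak {η : SS d} {ξ : Vec d} (h1 : dt ξ ξ = 1) {f : ℕ → SS d} {s : ℝ}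
    (hf : Lead η ξ f s) (φ : Vec d → ℝ) (hφ : Continuous φ) (hc : HasCompactSupport φ) :
    Tendsto (fun n => ∫ x, φ x * (f n : Vec d → ℝ) x) atTop (𝓝 0) := by
  obtain ⟨K, hK⟩ := hf
  have hη := SS.cont η
  have hdt := dt_cont ξ
  apply tend_aux _ (fun n x => (φ x * s * (η : Vec d → ℝ) x) * Real.cos (1 * (((n : ℝ) + 1) * dt x ξ)))
    (fun x => |φ x| * K)
  · intro n
    exact (hφ.mul (SS.cont (f n))).integrable_of_hasCompactSupport hc.mul_right
  · intro n
    apply Continuous.integrable_of_hasCompactSupport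
    · fun_prop
    · exact hc.mul_right.mul_right.mul_right
  · exact (hφ.abs.mul continuous_const).integrable_of_hasCompactSupport
      ((hc.comp_left (g := fun r : ℝ => |r|) (by simp)).mul_right)
  · intro n x
    have := mul_le_mul_of_nonneg_left (hK n x) (abs_nonneg (φ x))
    rw [← abs_mul] at this
    refine le_trans (le_of_eq ?_) (this.trans_eq (by ring))
    congr 1
    rw [one_mul]
    ring
  · exact RL _ (by fun_prop) hc.mul_right.mul_right ξ h1 1 one_pos

lemma Lead.sq {η : SS d} {ξ : Vec d} (h1 : dt ξ ξ = 1) {f : ℕ → SS d} {s : ℝ}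
    (hf : Lead η ξ f s) :
    Tendsto (fun n => ∫ x, ((f n : Vec d → ℝ) x) ^ 2) atTop
      (𝓝 (s ^ 2 * ((∫ x, ((η : Vec d → ℝ) x) ^ 2) / 2))) := by
  obtain ⟨K, hK⟩ := hf
  obtain ⟨E, hE⟩ := SS.bdd η
  have hη := SS.cont η
  have hdt := dt_cont ξ
  have hK0 : 0 ≤ K := by
    have := (abs_nonneg _).trans (hK 0 0)
    simpa using this
  have hE0 : 0 ≤ E := (abs_nonneg _).trans (hE 0)
  apply tend_aux _ (fun n x => s ^ 2 * ((η : Vec d → ℝ) x ^ 2 / 2 +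
      ((η : Vec d → ℝ) x ^ 2 / 2) * Real.cos (2 * (((n : ℝ) + 1) * dt x ξ))))
    ((K0 d).indicator fun x => K * (K + 2 * (|s| * E)))
  · intro n
    exact sq_int (f n)
  · intro n
    apply Continuous.integrable_of_hasCompactSupport
    · fun_prop
    · apply HasCompactSupport.intro (K0_compact d)
      intro x hx
      simp [η.2.2 x hx]
  · rw [integrable_indicator_iff (K0_closed d).measurableSet]
    exact integrableOn_const (K0_compact d).measure_lt_top.ne
  · intro n x
    by_cases hx : x ∈ K0 d
    · rw [Set.indicator_of_mem hx]
      have k1 := hK n x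
      rw [Real.cos_two_mul]
      set C := Real.cos (((n : ℝ) + 1) * dt x ξ)
      have hC : |C| ≤ 1 := Real.abs_cos_le_one _
      set F := (f n : Vec d → ℝ) x
      set A := s * ((η : Vec d → ℝ) x * C)
      have hA : |A| ≤ |s| * E := by
        simp only [A, abs_mul]
        gcongr
        calc _ ≤ E * 1 := by gcongr; exact hE x
          _ = E := mul_one _
      have e1 : 1 / ((n : ℝ) + 1) ≤ 1 := by
        rw [div_le_one (by positivity)]; linarith [Nat.cast_nonneg (α := ℝ) n]
      have k2 : |F - A| ≤ K := k1.trans (mul_le_of_le_one_right hK0 e1)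
      have k3 : |F + A| ≤ K + 2 * (|s| * E) := by
        have : F + A = (F - A) + 2 * A := by ring
        rw [this]
        refine (abs_add_le _ _).trans ?_
        rw [abs_mul, abs_two]
        linarith
      have : F ^ 2 - s ^ 2 * ((η : Vec d → ℝ) x ^ 2 / 2 + (η : Vec d → ℝ) x ^ 2 / 2 * (2 * C ^ 2 - 1))
        = (F - A) * (F + A) := by simp only [A]; ring
      rw [this, abs_mul]
      refine (mul_le_mul k1 k3 (abs_nonneg _) (by positivity)).trans_eq (by ring)
    · simp [η.2.2 x hx, (f n).2.2 x hx, hx]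
  · have hr := RL (fun x => (η : Vec d → ℝ) x ^ 2 / 2) (by fun_prop)
      (sq_cs2 η) ξ h1 2 two_pos
    have := (hr.const_add (∫ x, (η : Vec d → ℝ) x ^ 2 / 2)).const_mul (s ^ 2)
    rw [add_zero, integral_div] at this
    refine this.congr fun n => ?_
    rw [integral_const_mul, integral_add, integral_div]
    · apply Continuous.integrable_of_hasCompactSupport (by fun_prop)
        (sq_cs2 η)
    · apply Continuous.integrable_of_hasCompactSupport (by fun_prop)
      exact (sq_cs2 η).mul_right

lemma eta_exists (d : ℕ) : ∃ η : SS d, (∀ x, 0 ≤ (η : Vec d → ℝ) x ∧ (η : Vec d → ℝ) x ≤ 1) ∧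
    0 < ∫ x, ((η : Vec d → ℝ) x) ^ 2 := by
  let b : ContDiffBump (fun _ => 1/2 : Vec d) := ⟨1/8, 1/4, by norm_num, by norm_num⟩
  have hb : ContDiff ℝ (⊤ : ℕ∞) b := b.contDiff
  refine ⟨⟨b, hb, ?_⟩, fun x => ⟨b.nonneg, b.le_one⟩, ?_⟩
  · intro x hx
    apply b.zero_of_le_dist
    simp only [K0, Metric.mem_closedBall, not_le] at hx
    exact hx.le
  · apply Continuous.integral_pos_of_hasCompactSupport_nonneg_nonzero (x := fun _ => 1/2)
    · exact hb.continuous.pow 2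
    · exact b.hasCompactSupport.comp_left (g := fun r : ℝ => r ^ 2) (by simp)
    · intro x; positivity
    · have : b (fun _ => 1/2) = 1 := b.one_of_mem_closedBall (Metric.mem_closedBall_self b.rIn_pos.le)
      simp only
      rw [this]; norm_num

end


/-- **Lemma 3.4.** Let `d ≥ 2` and `B` a fixed matrix. There is `C > 0`
such that for every `w̄ = (v̄, Ū) ∈ Λ` there are subsolutions
`(v_k, U_k) ∈ C_c^∞(Q₁; ℝ^d × S₀^{d×d})` with pressures `q_k ∈ C_c^∞(Q₁)`
(`div U_k + ∇q_k = B v_k`, `div v_k = 0` on ℝ^d) such that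
(a) `sup_{Q₁} dist((v_k, U_k)(x), [−w̄, w̄]) → 0`;
(b) `(v_k, U_k) → 0` in the sense of distributions;
(c) `∫_{Q₁} |(v_k, U_k)|² ≥ C |w̄|²` for all `k`. -/
theorem stmt5 (d : ℕ) (hd : 2 ≤ d) (B : Mat d) :
    ∃ C : ℝ, 0 < C ∧
      ∀ wb ∈ Lam d,
        ∃ (w : ℕ → Vec d → Vec d × S0 d) (q : ℕ → Vec d → ℝ),
          (∀ k,
            ContDiff ℝ (⊤ : ℕ∞) (fun x => (w k x).1) ∧
            (∀ i j, ContDiff ℝ (⊤ : ℕ∞) (fun x => ((w k x).2 : Mat d) i j)) ∧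
            ContDiff ℝ (⊤ : ℕ∞) (q k) ∧
            HasCompactSupport (w k) ∧ tsupport (w k) ⊆ unitCube d ∧
            HasCompactSupport (q k) ∧ tsupport (q k) ⊆ unitCube d ∧
            (∀ x i, (∑ j, pd j (fun y => ((w k y).2 : Mat d) i j) x) + pd i (q k) x
                = ∑ j, B i j * (w k x).1 j) ∧
            (∀ x, ∑ i, pd i (fun y => (w k y).1 i) x = 0)) ∧
          -- (a) uniform convergence to the segment [−w̄, w̄]
          (∀ δ : ℝ, 0 < δ → ∃ N : ℕ, ∀ k ≥ N, ∀ x ∈ unitCube d,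
            Metric.infDist (w k x) (segment ℝ (-wb) wb) < δ) ∧
          -- (b) convergence to 0 in the sense of distributions
          (∀ φ : Vec d → ℝ, ContDiff ℝ (⊤ : ℕ∞) φ → HasCompactSupport φ →
            tsupport φ ⊆ unitCube d →
            (∀ i, Tendsto (fun k => ∫ x, φ x * (w k x).1 i) atTop (𝓝 0)) ∧
            (∀ i j, Tendsto (fun k => ∫ x, φ x * ((w k x).2 : Mat d) i j) atTop (𝓝 0))) ∧
          -- (c) lower bound on the L² norm
          (∀ k, (∫ x in unitCube d,
              ((∑ i, ((w k x).1 i) ^ 2) + ∑ i, ∑ j, (((w k x).2 : Mat d) i j) ^ 2))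
            ≥ C * ((∑ i, (wb.1 i) ^ 2) + ∑ i, ∑ j, ((wb.2 : Mat d) i j) ^ 2)) := by
  obtain ⟨η, hη01, hηpos⟩ := eta_exists d
  have hd0 : d ≠ 0 := by omega
  have hdR : (d : ℝ) ≠ 0 := by exact_mod_cast hd0
  refine ⟨(∫ x, ((η : Vec d → ℝ) x) ^ 2) / 4, by positivity, ?_⟩
  rintro ⟨a, Ub⟩ ⟨ha0, q0, ξ0, hξ0, hU, hv⟩
  simp only at ha0 hU hv
  -- normalization of ξ
  obtain ⟨ξ, h1, hUξ, haξ⟩ : ∃ ξ : Vec d, dt ξ ξ = 1 ∧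
      (∀ i, dt ((Ub : Mat d) i) ξ + q0 * ξ i = 0) ∧ dt a ξ = 0 := by
    have hs : 0 < dt ξ0 ξ0 := by
      obtain ⟨i, hi⟩ := Function.ne_iff.1 hξ0
      exact Finset.sum_pos' (fun i _ => mul_self_nonneg _)
        ⟨i, Finset.mem_univ _, mul_self_pos.2 hi⟩
    have hsq := Real.sqrt_pos.2 hs
    have hdt : ∀ b : Vec d, dt b ((1 / √(dt ξ0 ξ0)) • ξ0) = (1 / √(dt ξ0 ξ0)) * dt b ξ0 := by
      intro b
      simp only [dt, Finset.mul_sum, Pi.smul_apply, smul_eq_mul]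
      exact Finset.sum_congr rfl fun i _ => by ring
    refine ⟨(1 / √(dt ξ0 ξ0)) • ξ0, ?_, ?_, ?_⟩
    · have hcomm : ∀ b c : Vec d, dt b c = dt c b := fun b c =>
        Finset.sum_congr rfl fun i _ => mul_comm _ _
      rw [hdt, hcomm ((1 / √(dt ξ0 ξ0)) • ξ0) ξ0, hdt, ← mul_assoc]
      have := Real.mul_self_sqrt hs.le
      field_simp
      rw [Real.sq_sqrt hs.le]
    · intro i
      rw [hdt]
      have := hU i
      simp only [Pi.smul_apply, smul_eq_mul]
      have h2 : dt ((Ub : Mat d) i) ξ0 + q0 * ξ0 i = 0 := this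
      linear_combination (1 / √(dt ξ0 ξ0)) * h2
    · rw [hdt, show dt a ξ0 = 0 from hv, mul_zero]
  obtain ⟨hUs, hUt⟩ := Ub.2
  let N : Mat d := fun i j => (Ub : Mat d) i j + if i = j then q0 else 0
  have hNs : ∀ i j, N i j = N j i := by
    intro i j
    simp only [N, hUs i j, eq_comm (a := i) (b := j)]
  have hNξ : ∀ i, dt (N i) ξ = 0 := by
    intro i
    rw [← hUξ i]
    simp [dt, N, add_mul, Finset.sum_add_distrib]
  have hVl : ∀ i, Lead η ξ (fun n => vv a ξ (psi η ξ n) i) (a i) :=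
    vv_lead η a ξ h1 haξ
  have hUl : ∀ i j, Lead η ξ (fun n => UU B N a ξ (psi η ξ n) i j) ((Ub : Mat d) i j) := by
    intro i j
    refine (UU_lead η B N a ξ h1 hNξ i j).cast ?_
    have : ∑ m, N m m = d * q0 := by
      simp [N, Finset.sum_add_distrib, hUt]
    rw [this]
    simp only [N]
    split_ifs
    · field_simp
      ring
    · ring
  let W : ℕ → Vec d → Vec d × S0 d := fun n x =>
    (fun i => (vv a ξ (psi η ξ n) i : Vec d → ℝ) x,
      ⟨fun i j => (UU B N a ξ (psi η ξ n) i j : Vec d → ℝ) x,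
        fun i j => congrArg (fun f : SS d => (f : Vec d → ℝ) x) (UU_symm B N hNs a ξ _ i j), by
          have := congrArg (fun f : SS d => (f : Vec d → ℝ) x) (UU_trace hd0 B N a ξ (psi η ξ n))
          simpa using this⟩)
  have hW0 : ∀ n, ∀ x ∉ K0 d, W n x = 0 := by
    intro n x hx
    refine Prod.ext ?_ (Subtype.ext ?_)
    · funext i
      exact (vv a ξ (psi η ξ n) i).2.2 x hx
    · funext i j
      exact (UU B N a ξ (psi η ξ n) i j).2.2 x hx
  -- L² convergence
  set wn : ℝ := (∑ i, (a i) ^ 2) + ∑ i, ∑ j, ((Ub : Mat d) i j) ^ 2 with hwn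
  have hwn0 : 0 < wn := by
    obtain ⟨i, hi⟩ := Function.ne_iff.1 ha0
    have : 0 < ∑ i, (a i) ^ 2 := Finset.sum_pos' (fun i _ => sq_nonneg _)
        ⟨i, Finset.mem_univ _, sq_pos_of_ne_zero hi⟩
    have h2 : 0 ≤ ∑ i, ∑ j, ((Ub : Mat d) i j) ^ 2 :=
      Finset.sum_nonneg fun i _ => Finset.sum_nonneg fun j _ => sq_nonneg _
    linarith
  have hL2 : Tendsto (fun n => ∫ x in unitCube d,
      ((∑ i, ((W n x).1 i) ^ 2) + ∑ i, ∑ j, (((W n x).2 : Mat d) i j) ^ 2)) atTop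
      (𝓝 (wn * ((∫ x, ((η : Vec d → ℝ) x) ^ 2) / 2))) := by
    have t1 := (tendsto_finsetSum Finset.univ fun i _ => (hVl i).sq h1).add
      (tendsto_finsetSum Finset.univ fun i _ => tendsto_finsetSum Finset.univ fun j _ =>
        (hUl i j).sq h1)
    simp only [← Finset.sum_mul, ← add_mul] at t1
    refine t1.congr fun n => ?_
    rw [setIntegral_eq_integral_of_forall_compl_eq_zero]
    · simp only [W]
      rw [integral_add, integral_finsetSum, integral_finsetSum]
      · congr 1
        refine Finset.sum_congr rfl fun i _ => ?_
        rw [integral_finsetSum]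
        exact fun j _ => sq_int _
      · exact fun i _ => integrable_finsetSum _ fun j _ => sq_int _
      · exact fun i _ => sq_int _
      · exact integrable_finsetSum _ fun i _ => sq_int _
      · exact integrable_finsetSum _ fun i _ => integrable_finsetSum _ fun j _ => sq_int _
    · intro x hx
      have hx' : x ∉ K0 d := fun h => hx (K0_sub d h)
      simp [hW0 n x hx']
  obtain ⟨N0, hN0⟩ := eventually_atTop.1 (hL2.eventually (lt_mem_nhds
    (show wn * ((∫ x, ((η : Vec d → ℝ) x) ^ 2) / 4) < _ from
      mul_lt_mul_of_pos_left (by linarith) hwn0)))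
  have htW : ∀ n, tsupport (W n) ⊆ K0 d := fun n =>
    closure_minimal (fun x hx => by_contra fun h => hx (hW0 n x h)) (K0_closed d)
  have htq : ∀ f : SS d, tsupport (f : Vec d → ℝ) ⊆ K0 d := fun f =>
    closure_minimal (fun x hx => by_contra fun h => hx (f.2.2 x h)) (K0_closed d)
  have hshift : Tendsto (fun k : ℕ => k + N0) atTop atTop := tendsto_add_atTop_nat N0
  refine ⟨fun k => W (k + N0), fun k => (qq B N a ξ (psi η ξ (k + N0)) : Vec d → ℝ), ?_, ?_, ?_, ?_⟩
  · intro k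
    refine ⟨contDiff_pi.2 fun i => (vv a ξ (psi η ξ (k + N0)) i).2.1,
      fun i j => (UU B N a ξ (psi η ξ (k + N0)) i j).2.1, (qq B N a ξ (psi η ξ (k + N0))).2.1,
      HasCompactSupport.intro (K0_compact d) (hW0 _), (htW _).trans (K0_sub d),
      SS.cs _, (htq _).trans (K0_sub d), ?_, ?_⟩
    · intro x i
      have := congrArg (fun f : SS d => (f : Vec d → ℝ) x) (div_UU B N a ξ (psi η ξ (k + N0)) i)
      simpa [pd_eq, W] using this
    · intro x
      have := congrArg (fun f : SS d => (f : Vec d → ℝ) x) (div_vv a ξ (psi η ξ (k + N0)))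
      simpa [pd_eq, W] using this
  · intro δ hδ
    choose KV hKV using hVl
    choose KU hKU using hUl
    let KK : ℝ := (∑ i, |KV i|) + ∑ i, ∑ j, |KU i j|
    have hKK1 : 0 ≤ ∑ i, |KV i| := Finset.sum_nonneg fun i _ => abs_nonneg _
    have hKK2 : 0 ≤ ∑ i, ∑ j, |KU i j| :=
      Finset.sum_nonneg fun i _ => Finset.sum_nonneg fun j _ => abs_nonneg _
    have hv : ∀ i, KV i ≤ KK := by
      intro i
      have := Finset.single_le_sum (f := fun i => |KV i|) (fun i _ => abs_nonneg _) (Finset.mem_univ i)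
      linarith [le_abs_self (KV i)]
    have hu : ∀ i j, KU i j ≤ KK := by
      intro i j
      have := Finset.single_le_sum (f := fun j => |KU i j|) (fun j _ => abs_nonneg _) (Finset.mem_univ j)
      have h2 := Finset.single_le_sum (f := fun i => ∑ j, |KU i j|)
        (fun i _ => Finset.sum_nonneg fun j _ => abs_nonneg _) (Finset.mem_univ i)
      linarith [le_abs_self (KU i j)]
    have ht : Tendsto (fun k : ℕ => KK * (1 / (((k + N0 : ℕ) : ℝ) + 1))) atTop (𝓝 0) := by
      simpa using ((tendsto_one_div_add_atTop_nhds_zero_nat (𝕜 := ℝ)).comp hshift).const_mul KK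
    obtain ⟨N1, hN1⟩ := eventually_atTop.1 (ht.eventually (gt_mem_nhds hδ))
    refine ⟨N1, fun k hk x _ => lt_of_le_of_lt ?_ (hN1 k hk)⟩
    set n := k + N0
    set c : ℝ := (η : Vec d → ℝ) x * Real.cos (((n : ℝ) + 1) * dt x ξ) with hc
    have hc1 : |c| ≤ 1 := by
      rw [hc, abs_mul]
      have := hη01 x
      exact mul_le_one₀ (by rw [abs_of_nonneg this.1]; exact this.2) (abs_nonneg _)
        (Real.abs_cos_le_one _)
    have hmem : c • ((a, Ub) : Vec d × S0 d) ∈ segment ℝ (-((a, Ub) : Vec d × S0 d)) (a, Ub) := by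
      refine ⟨(1 - c) / 2, (1 + c) / 2, ?_, ?_, by ring, ?_⟩
      · linarith [(abs_le.1 hc1).2]
      · linarith [(abs_le.1 hc1).1]
      · module
    refine (Metric.infDist_le_dist_of_mem hmem).trans ?_
    have hr : 0 ≤ KK * (1 / ((n : ℝ) + 1)) := mul_nonneg (add_nonneg hKK1 hKK2) (by positivity)
    have hinv : 0 ≤ 1 / ((n : ℝ) + 1) := by positivity
    rw [Prod.dist_eq, max_le_iff]
    constructor
    · rw [dist_pi_le_iff hr]
      intro i
      rw [Real.dist_eq]
      have := (hKV i n x).trans (mul_le_mul_of_nonneg_right (hv i) hinv)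
      rw [← hc] at this
      simpa [W, mul_comm] using this
    · rw [Subtype.dist_eq, dist_pi_le_iff hr]
      intro i
      rw [dist_pi_le_iff hr]
      intro j
      rw [Real.dist_eq]
      have := (hKU i j n x).trans (mul_le_mul_of_nonneg_right (hu i j) hinv)
      rw [← hc] at this
      simpa [W, mul_comm] using this
  · intro φ hφ hφc _
    exact ⟨fun i => ((hVl i).weak h1 φ hφ.continuous hφc).comp hshift,
      fun i j => ((hUl i j).weak h1 φ hφ.continuous hφc).comp hshift⟩
  · intro k
    have := hN0 (k + N0) (Nat.le_add_left _ _)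
    rw [mul_comm] at this
    exact this.le
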